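/- Every finite subgroup of SO(3) acting on S² in the standard way has quotient S²/Γ homeomorphic to S². Consequently, for any finite Γ ⊂ SO(3), the quotient ℝ³/Γ is homeomorphic to ℝ³. -/

import Mathlib

open Matrix

attribute [local instance] starRingOfComm

/-- The orbit relation on a subset `S ⊆ ℝ³` of a group `Γ` of orthogonal matrices
acting in the standard (linear) way, via `mulVec`. -/
def soRel (Γ : Subgroup (Matrix.orthogonalGroup (Fin 3) ℝ))
    (S : Set (EuclideanSpace ℝ (Fin 3))) (x y : S) : Prop :=
  ∃ g ∈ Γ, (g : Matrix (Fin 3) (Fin 3) ℝ).mulVec (x : EuclideanSpace ℝ (Fin 3)) = y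

/-!
Identify `S²` with the projective line of `ℂ²` by the Hopf map; rotations lift to area-preserving
linear maps of `ℂ²`, unique up to scalars. For `p : ℂ²` let `B p` be the form of degree `|Γ|` whose
zeros are the projective orbit of `p`. Counting zeros gives the Plücker relation
`B p z * B q w - B q z * B p w = c * B z w`, so the pencil spanned by two orbit forms maps the
projective line onto itself with fibres exactly the orbits. Rescaled to preserve norms, it descends
to a norm-preserving continuous surjection `ℝ³ → ℝ³` whose fibres are the orbits of `Γ`, which is
a closed map and hence a quotient map, over the sphere as well as over the whole space.
-/

namespace SphereQuotient

open Polynomial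

section Forms

variable {K V : Type*} [Field K] [AddCommGroup V] [Module K V]

/-- Homogeneous forms of degree `N` on a vector space, encoded without coordinates: along every
line `t ↦ u + t • v`, the function `f` is a polynomial of degree at most `N` in `t` whose
coefficient of `t ^ N` is `f v`. -/
def IsForm (N : ℕ) (f : V → K) : Prop :=
  ∀ u v, ∃ P : K[X], P.natDegree ≤ N ∧ P.coeff N = f v ∧ ∀ t, P.eval t = f (u + t • v)

namespace IsForm

variable {M N : ℕ} {f g : V → K}

protected lemma add (hf : IsForm N f) (hg : IsForm N g) : IsForm N (fun v => f v + g v) := by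
  intro u v
  obtain ⟨P, hPdeg, hPtop, hPeval⟩ := hf u v
  obtain ⟨Q, hQdeg, hQtop, hQeval⟩ := hg u v
  exact ⟨P + Q, natDegree_add_le_of_degree_le hPdeg hQdeg, by simp [hPtop, hQtop],
    by simp [hPeval, hQeval]⟩

protected lemma mul (hf : IsForm M f) (hg : IsForm N g) :
    IsForm (M + N) (fun v => f v * g v) := by
  intro u v
  obtain ⟨P, hPdeg, hPtop, hPeval⟩ := hf u v
  obtain ⟨Q, hQdeg, hQtop, hQeval⟩ := hg u v
  exact ⟨P * Q, natDegree_mul_le_of_le hPdeg hQdeg,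
    by rw [coeff_mul_add_eq_of_natDegree_le hPdeg hQdeg, hPtop, hQtop],
    by simp [hPeval, hQeval]⟩

lemma const (c : K) : IsForm 0 (fun _ : V => c) :=
  fun _ _ => ⟨C c, by simp, by simp, by simp⟩

lemma const_mul (hf : IsForm N f) (c : K) : IsForm N (fun v => c * f v) := by
  simpa only [zero_add] using (const c).mul hf

lemma mul_const (hf : IsForm N f) (c : K) : IsForm N (fun v => f v * c) :=
  hf.mul (const c)

protected lemma sub (hf : IsForm N f) (hg : IsForm N g) : IsForm N (fun v => f v - g v) := by
  simpa only [sub_eq_add_neg, neg_one_mul] using hf.add (hg.const_mul (-1))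

lemma of_linearMap (l : V →ₗ[K] K) : IsForm 1 l := by
  intro u v
  refine ⟨C (l v) * X + C (l u), natDegree_linear_le, by simp [coeff_C], fun t => ?_⟩
  rw [eval_add, eval_mul, eval_C, eval_C, eval_X, map_add, map_smul, smul_eq_mul]
  ring

lemma of_bilinForm {B : LinearMap.BilinForm K V} (S T : V →ₗ[K] V) :
    IsForm 2 (fun v => B (S v) (T v)) := by
  intro u v
  refine ⟨C (B (S v) (T v)) * X ^ 2 + C (B (S u) (T v) + B (S v) (T u)) * X + C (B (S u) (T u)),
    natDegree_quadratic_le, by simp, fun t => ?_⟩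
  simp only [eval_add, eval_mul, eval_C, eval_pow, eval_X, map_add, map_smul,
    LinearMap.add_apply, LinearMap.smul_apply, smul_eq_mul]
  ring

protected lemma prod {ι : Type*} {s : Finset ι} {n : ι → ℕ} {f : ι → V → K}
    (hf : ∀ i ∈ s, IsForm (n i) (f i)) : IsForm (∑ i ∈ s, n i) (fun v => ∏ i ∈ s, f i v) := by
  classical
  induction s using Finset.induction_on with
  | empty => simpa using const 1
  | insert a s ha ih =>
    simp only [Finset.sum_insert ha, Finset.prod_insert ha]
    exact (hf a (s.mem_insert_self a)).mul (ih fun i hi => hf i (Finset.mem_insert_of_mem hi))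

section Infinite

variable [Infinite K]

protected lemma map_smul (hf : IsForm N f) (c : K) (v : V) : f (c • v) = c ^ N * f v := by
  obtain ⟨P, -, hPtop, hPeval⟩ := hf 0 v
  obtain ⟨Q, -, hQtop, hQeval⟩ := hf 0 (c • v)
  have hQ : Q = P.comp (C c * X) := by
    refine Polynomial.funext fun t => ?_
    rw [eval_comp, eval_mul, eval_C, eval_X, hPeval, hQeval, smul_smul, mul_comm]
  rw [← hQtop, hQ, comp_C_mul_X_coeff, hPtop, mul_comm]

lemma eq_zero_of_mul_eq_zero (hf : IsForm M f) (hg : IsForm N g) (hf₀ : ∃ v, f v ≠ 0)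
    (hfg : ∀ v, f v * g v = 0) (u : V) : g u = 0 := by
  obtain ⟨v, hv⟩ := hf₀
  obtain ⟨P, -, -, hP⟩ := hf u (v - u)
  obtain ⟨Q, -, -, hQ⟩ := hg u (v - u)
  have hPQ : P * Q = 0 := Polynomial.funext fun t => by
    rw [eval_mul, hP, hQ, hfg, eval_zero]
  have hP₀ : P ≠ 0 := by
    rintro rfl
    exact hv (by simpa using (hP 1).symm)
  simpa [(mul_eq_zero.1 hPQ).resolve_left hP₀] using (hQ 0).symm

end Infinite

end IsForm

section Generic

variable [Infinite K]

variable (K V) in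
/-- The filter of sets containing the complement of the zero set of a nonzero form, that is, a
nonempty Zariski open cone: `∀ᶠ v in generic K V, P v` says that `P` holds for generic `v`. -/
def generic : Filter V where
  sets := {s | ∃ N, ∃ f : V → K, IsForm N f ∧ (∃ v, f v ≠ 0) ∧ ∀ v, f v ≠ 0 → v ∈ s}
  univ_sets := ⟨0, _, IsForm.const 1, ⟨0, one_ne_zero⟩, fun _ _ => trivial⟩
  sets_of_superset := fun ⟨N, f, hf, hf₀, hs⟩ hst => ⟨N, f, hf, hf₀, fun v hv => hst (hs v hv)⟩
  inter_sets := by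
    rintro s t ⟨M, f, hf, hf₀, hs⟩ ⟨N, g, hg, ⟨u, hu⟩, ht⟩
    refine ⟨M + N, _, hf.mul hg, ?_, fun v hv =>
      ⟨hs v (left_ne_zero_of_mul hv), ht v (right_ne_zero_of_mul hv)⟩⟩
    by_contra! hfg
    exact hu (hf.eq_zero_of_mul_eq_zero hg hf₀ hfg u)

instance : (generic K V).NeBot :=
  Filter.neBot_iff.2 fun h => by
    obtain ⟨N, f, -, ⟨v, hv⟩, hempty⟩ : ∅ ∈ generic K V := Filter.empty_mem_iff_bot.2 h
    exact hempty v hv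

lemma IsForm.eventually_ne_zero {N : ℕ} {f : V → K} (hf : IsForm N f) (hf₀ : ∃ v, f v ≠ 0) :
    ∀ᶠ v in generic K V, f v ≠ 0 :=
  ⟨N, f, hf, hf₀, fun _ hv => hv⟩

lemma IsForm.eq_zero_of_eventually {N : ℕ} {f : V → K} (hf : IsForm N f)
    (hf₀ : ∀ᶠ v in generic K V, f v = 0) (v : V) : f v = 0 := by
  by_contra hv
  obtain ⟨w, hw, hw₀⟩ := ((hf.eventually_ne_zero ⟨v, hv⟩).and hf₀).exists
  exact hw hw₀

end Generic

/-- Area forms on a plane. The field `plane` is the linear relation between any three vectors of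
the plane; it encodes that the dimension is at most two. -/
structure IsAreaForm (ω : LinearMap.BilinForm K V) : Prop where
  alt : ω.IsAlt
  exists_ne_zero : ∀ v ≠ 0, ∃ w, ω v w ≠ 0
  plane : ∀ u v w, ω u v • w + ω v w • u + ω w u • v = 0

section AreaForm

variable {ω : LinearMap.BilinForm K V} (hω : IsAreaForm ω)

include hω

lemma IsAreaForm.swap (u v : V) : ω u v = -ω v u := (LinearMap.IsAlt.neg hω.alt v u).symm

lemma IsAreaForm.exists_eq_smul {u v : V} (hu : u ≠ 0) (huv : ω u v = 0) :
    ∃ c : K, v = c • u := by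
  obtain ⟨w, hw⟩ := hω.exists_ne_zero u hu
  refine ⟨(ω u w)⁻¹ * ω v w, ?_⟩
  have hrel := hω.plane u v w
  rw [huv, zero_smul, zero_add, hω.swap w u, neg_smul, add_neg_eq_zero] at hrel
  rw [mul_smul, hrel, inv_smul_smul₀ hw]

lemma IsAreaForm.injective {f : V →ₗ[K] V} (hf : ∀ v w, ω (f v) (f w) = ω v w) :
    Function.Injective f := by
  refine (injective_iff_map_eq_zero f).2 fun v hv => ?_
  by_contra hv₀
  obtain ⟨w, hw⟩ := hω.exists_ne_zero v hv₀
  exact hw (by rw [← hf, hv, map_zero, LinearMap.zero_apply])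

lemma IsAreaForm.exists_forall_eq_smul {f : V →ₗ[K] V} (hf : ∀ v, ω v (f v) = 0) :
    ∃ c : K, ∀ v, f v = c • v := by
  have hdep (v : V) : ¬ LinearIndependent K ![v, f v] := by
    rcases eq_or_ne v 0 with rfl | hv
    · exact fun h => h.ne_zero 0 rfl
    · obtain ⟨c, hc⟩ := hω.exists_eq_smul hv (hf v)
      rw [LinearIndependent.pair_iff' hv]
      exact fun h => h c hc.symm
  obtain ⟨c, rfl⟩ := LinearMap.exists_eq_smul_id_of_forall_notLinearIndependent hdep
  exact ⟨c, fun _ => rfl⟩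

lemma IsAreaForm.add_div_smul_eq_div_smul (u : V) {v w : V} (hvw : ω v w ≠ 0) :
    u + (ω u v / ω v w) • w = (ω u w / ω v w) • v := by
  refine smul_right_injective V hvw ?_
  simp only [smul_add, smul_smul, mul_div_cancel₀ _ hvw]
  have hrel := hω.plane u v w
  rw [hω.swap w u, neg_smul, ← sub_eq_add_neg, sub_eq_zero] at hrel
  rw [← hrel, add_comm]

lemma IsForm.exists_root [IsAlgClosed K] [Nontrivial V] {N : ℕ} {f : V → K} (hf : IsForm N f)
    (hN : N ≠ 0) : ∃ v ≠ 0, f v = 0 := by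
  obtain ⟨v, hv⟩ := exists_ne (0 : V)
  obtain ⟨u, hvu⟩ := hω.exists_ne_zero v hv
  by_cases hfv : f v = 0
  · exact ⟨v, hv, hfv⟩
  obtain ⟨P, -, hPtop, hPeval⟩ := hf u v
  have hPdeg : P.degree ≠ 0 := fun h => by
    rw [eq_C_of_degree_eq_zero h, coeff_C_of_ne_zero hN] at hPtop
    exact hfv hPtop.symm
  obtain ⟨t, ht⟩ := IsAlgClosed.exists_root P hPdeg
  refine ⟨u + t • v, fun h => hvu ?_, by rw [← hPeval, ht]⟩
  simpa [hω.alt v] using congrArg (ω v) h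

/-- A line in direction `p₀` meets the projective class of every `p i`, and `f p₀ = 0` lowers the
degree of `f` along it below the number of these roots. -/
lemma IsForm.eq_zero_of_roots [Infinite K] {ι : Type*} [Fintype ι] {f : V → K}
    (hf : IsForm (Fintype.card ι) f) {p₀ : V} {p : ι → V} (hp₀ : p₀ ≠ 0)
    (hpp₀ : ∀ i, ω (p i) p₀ ≠ 0) (hp : Pairwise fun i j => ω (p i) (p j) ≠ 0)
    (hfp₀ : f p₀ = 0) (hfp : ∀ i, f (p i) = 0) (v : V) : f v = 0 := by
  by_cases hv : ω p₀ v = 0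
  · obtain ⟨c, rfl⟩ := hω.exists_eq_smul hp₀ hv
    rw [hf.map_smul, hfp₀, mul_zero]
  have hvp₀ : ω v p₀ ≠ 0 := by rwa [hω.swap, neg_ne_zero]
  obtain ⟨P, hPdeg, hPtop, hPeval⟩ := hf v p₀
  have hline (i : ι) : v + (ω v (p i) / ω (p i) p₀) • p₀ = (ω v p₀ / ω (p i) p₀) • p i :=
    hω.add_div_smul_eq_div_smul v (hpp₀ i)
  have hinj : Function.Injective fun i => ω v (p i) / ω (p i) p₀ := by
    intro i j hij
    by_contra hne
    have hsmul : (ω v p₀ / ω (p i) p₀) • p i = (ω v p₀ / ω (p j) p₀) • p j := by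
      rw [← hline, ← hline, show ω v (p i) / ω (p i) p₀ = ω v (p j) / ω (p j) p₀ from hij]
    have hzero := congrArg (ω (p i)) hsmul
    simp only [map_smul, hω.alt (p i), smul_eq_mul, mul_zero] at hzero
    exact mul_ne_zero (div_ne_zero hvp₀ (hpp₀ j)) (hp hne) hzero.symm
  have hdeg : P.degree < (Finset.univ : Finset ι).card := by
    rw [degree_lt_iff_coeff_zero]
    intro m hm
    obtain hm | rfl := (Finset.card_univ (α := ι) ▸ hm : Fintype.card ι ≤ m).lt_or_eq
    · exact coeff_eq_zero_of_natDegree_lt (hPdeg.trans_lt hm)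
    · rw [hPtop, hfp₀]
  have hP : P = 0 := eq_zero_of_degree_lt_of_eval_index_eq_zero _ hinj.injOn hdeg fun i _ => by
    rw [hPeval, hline, hf.map_smul, hfp, mul_zero]
  have hv₀ := hPeval 0
  rwa [hP, eval_zero, zero_smul, add_zero, eq_comm] at hv₀

end AreaForm

end Forms

section ProjectiveRep

variable {K V G : Type*} [Field K] [AddCommGroup V] [Module K V] [Group G]

/-- A faithful projective representation of `G` by area-preserving linear maps of a plane; being
faithful means that distinct group elements act differently on the projective line. -/
structure IsProjectiveRep (ω : LinearMap.BilinForm K V) (A : G → V →ₗ[K] V) : Prop where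
  area : ∀ g v w, ω (A g v) (A g w) = ω v w
  mul : ∀ g h, ∃ c : K, ∀ v, A (g * h) v = c • A g (A h v)
  faithful : Pairwise fun g h => ∃ v, ω (A g v) (A h v) ≠ 0

variable {ω : LinearMap.BilinForm K V} {A : G → V →ₗ[K] V}

lemma IsProjectiveRep.exists_eq_smul_one (hA : IsProjectiveRep ω A) (hω : IsAreaForm ω) :
    ∃ c : K, ∀ v, v = c • A 1 v := by
  obtain ⟨c, hc⟩ := hA.mul 1 1
  refine ⟨c, fun v => hω.injective (hA.area 1) ?_⟩
  rw [map_smul, ← hc, one_mul]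

end ProjectiveRep

section OrbitForm

variable {K V G : Type*} [Field K] [AddCommGroup V] [Module K V] [Fintype G]

/-- The form of degree `|G|` in `w` whose zeros are the points of the projective orbit of `p`. -/
def orbitForm (ω : LinearMap.BilinForm K V) (A : G → V →ₗ[K] V) (p w : V) : K :=
  ∏ g, ω (A g p) w

/-- In the basis `p, q`, the map of the projective line to itself given by the pencil of forms
spanned by the orbit forms of `p` and `q`. -/
def orbitMap (ω : LinearMap.BilinForm K V) (A : G → V →ₗ[K] V) (p q v : V) : V :=
  orbitForm ω A p v • p + orbitForm ω A q v • q

variable {ω : LinearMap.BilinForm K V} {A : G → V →ₗ[K] V}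

lemma isForm_orbitForm (p : V) : IsForm (Fintype.card G) (orbitForm ω A p) := by
  simpa [orbitForm] using! IsForm.prod fun (g : G) (_ : g ∈ Finset.univ) =>
    IsForm.of_linearMap (ω (A g p))

lemma isForm_orbitForm_left (w : V) : IsForm (Fintype.card G) fun p => orbitForm ω A p w := by
  simpa [orbitForm] using! IsForm.prod fun (g : G) (_ : g ∈ Finset.univ) =>
    IsForm.of_linearMap ((ω.flip w).comp (A g))

lemma orbitForm_eq_zero_iff {p w : V} : orbitForm ω A p w = 0 ↔ ∃ g, ω (A g p) w = 0 := by
  simp [orbitForm, Finset.prod_eq_zero_iff]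

lemma orbitMap_smul [Infinite K] (p q : V) (c : K) (v : V) :
    orbitMap ω A p q (c • v) = c ^ Fintype.card G • orbitMap ω A p q v := by
  simp only [orbitMap, (isForm_orbitForm _).map_smul, smul_add, mul_smul]

lemma exists_area_orbitMap_left_eq_zero [IsAlgClosed K] [Nontrivial V] [Nonempty G]
    (hω : IsAreaForm ω) (p q u : V) :
    ∃ v ≠ 0, ω (orbitMap ω A p q v) u = 0 := by
  have hform : IsForm (Fintype.card G) fun v => ω (orbitMap ω A p q v) u := by
    simpa [orbitMap, mul_comm (orbitForm _ _ _ _)] using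
      ((isForm_orbitForm p).const_mul (ω p u)).add ((isForm_orbitForm q).const_mul (ω q u))
  exact hform.exists_root hω Fintype.card_ne_zero

variable [Group G]

lemma exists_orbitForm_apply (hA : IsProjectiveRep ω A) (h : G) :
    ∃ χ : K, ∀ p w, orbitForm ω A p (A h w) = χ * orbitForm ω A p w := by
  choose c hc using hA.mul h
  refine ⟨∏ g, c g, fun p w => ?_⟩
  rw [orbitForm, orbitForm, ← Equiv.prod_comp (Equiv.mulLeft h), ← Finset.prod_mul_distrib]
  refine Finset.prod_congr rfl fun g _ => ?_
  rw [Equiv.coe_mulLeft, hc, map_smul, LinearMap.smul_apply, hA.area, smul_eq_mul]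

variable (hA : IsProjectiveRep ω A) (hω : IsAreaForm ω)

include hA hω

lemma orbitForm_self (p : V) : orbitForm ω A p p = 0 := by
  obtain ⟨c, hc⟩ := hA.exists_eq_smul_one hω
  refine orbitForm_eq_zero_iff.2 ⟨1, ?_⟩
  nth_rw 2 [hc p]
  rw [map_smul, hω.alt, smul_zero]

lemma exists_orbitForm_swap :
    ∃ ε : K, ∀ p w, orbitForm ω A p w = ε * orbitForm ω A w p := by
  have hinv (g : G) : ∃ c : K, ∀ v, v = c • A g (A g⁻¹ v) := by
    obtain ⟨c, hc⟩ := hA.exists_eq_smul_one hω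
    obtain ⟨d, hd⟩ := hA.mul g g⁻¹
    exact ⟨c * d, fun v => by rw [mul_smul, ← hd, mul_inv_cancel, ← hc]⟩
  choose c hc using hinv
  refine ⟨∏ g, -c g, fun p w => ?_⟩
  rw [orbitForm, orbitForm, ← Equiv.prod_comp (Equiv.inv G) fun g => ω (A g w) p,
    ← Finset.prod_mul_distrib]
  refine Finset.prod_congr rfl fun g _ => ?_
  nth_rw 1 [hc g w]
  rw [map_smul, hA.area, hω.swap, smul_eq_mul, Equiv.inv_apply, mul_neg, neg_mul]

variable [Infinite K]

lemma exists_orbitForm_ne_zero {p : V} (hp : p ≠ 0) : ∃ w, orbitForm ω A p w ≠ 0 := by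
  have hfactor (g : G) : ∀ᶠ w in generic K V, ω (A g p) w ≠ 0 :=
    (IsForm.of_linearMap (ω (A g p))).eventually_ne_zero
      (hω.exists_ne_zero _ ((map_ne_zero_iff _ (hω.injective (hA.area g))).2 hp))
  obtain ⟨w, hw⟩ := (Filter.eventually_all.2 hfactor).exists
  exact ⟨w, Finset.prod_ne_zero_iff.2 fun g _ => hw g⟩

/-- For fixed `z` off a proper algebraic subset, both sides are forms of degree `|G|` in `w` that
agree on the orbit of `z` and at `p`. -/
lemma orbitForm_plucker {ε : K} (hε : ∀ p w, orbitForm ω A p w = ε * orbitForm ω A w p) {p : V}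
    (hp : p ≠ 0) (q z w : V) :
    orbitForm ω A p z * orbitForm ω A q w - orbitForm ω A q z * orbitForm ω A p w =
      ε * orbitForm ω A q p * orbitForm ω A z w := by
  set B := orbitForm ω A with hB
  let defect (z w : V) : K := B p z * B q w - B q z * B p w - ε * B q p * B z w
  have hright (z : V) : IsForm (Fintype.card G) (defect z) :=
    (((isForm_orbitForm q).const_mul _).sub ((isForm_orbitForm p).const_mul _)).sub
      ((isForm_orbitForm z).const_mul _)
  have hleft : IsForm (Fintype.card G) fun z => defect z w :=
    (((isForm_orbitForm p).mul_const _).sub ((isForm_orbitForm q).mul_const _)).sub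
      ((isForm_orbitForm_left w).const_mul _)
  have hp₀ (z : V) : defect z p = 0 := by
    simp only [defect, B, orbitForm_self hA hω p, hε p z]
    ring
  have horbit (z : V) (g : G) : defect z (A g z) = 0 := by
    obtain ⟨χ, hχ⟩ := exists_orbitForm_apply hA g
    have hz : B z (A g z) = 0 := (orbitForm_eq_zero_iff (ω := ω)).2 ⟨g, hω.alt _⟩
    simp only [defect, hz, B, hχ]
    ring
  have hzp : ∀ᶠ z in generic K V, B p z ≠ 0 :=
    (isForm_orbitForm p).eventually_ne_zero (exists_orbitForm_ne_zero hA hω hp)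
  have hzz : ∀ᶠ z in generic K V, Pairwise fun g h => ω (A g z) (A h z) ≠ 0 :=
    Filter.eventually_all.2 fun g => Filter.eventually_all.2 fun h => Filter.eventually_all.2
      fun hgh => (IsForm.of_bilinForm (B := ω) (A g) (A h)).eventually_ne_zero (hA.faithful hgh)
  have hgeneric : ∀ᶠ z in generic K V, defect z w = 0 := by
    filter_upwards [hzp, hzz] with z hzp hzz
    refine (hright z).eq_zero_of_roots hω hp (fun g hg => hzp ?_) hzz (hp₀ z) (horbit z) w
    rw [hε p z, hB, orbitForm_eq_zero_iff.2 ⟨g, hg⟩, mul_zero]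
  exact sub_eq_zero.1 (hleft.eq_zero_of_eventually hgeneric z)

lemma exists_area_orbitMap {p q : V} (hpq : orbitForm ω A p q ≠ 0) :
    ∃ c ≠ 0, ∀ v w, ω (orbitMap ω A p q v) (orbitMap ω A p q w) = c * orbitForm ω A v w := by
  obtain ⟨ε, hε⟩ := exists_orbitForm_swap hA hω
  have hp : p ≠ 0 := by
    rintro rfl
    obtain ⟨g, hg⟩ : ∃ g, ω (A g 0) q = 0 := ⟨1, by rw [map_zero, map_zero, LinearMap.zero_apply]⟩
    exact hpq (orbitForm_eq_zero_iff.2 ⟨g, hg⟩)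
  have hω_pq : ω p q ≠ 0 := fun h => by
    obtain ⟨c, rfl⟩ := hω.exists_eq_smul hp h
    rw [(isForm_orbitForm p).map_smul, orbitForm_self hA hω, mul_zero] at hpq
    exact hpq rfl
  refine ⟨ω p q * (ε * orbitForm ω A q p), mul_ne_zero hω_pq (hε p q ▸ hpq), fun v w => ?_⟩
  rw [mul_assoc, ← orbitForm_plucker hA hω hε hp q v w]
  simp only [orbitMap, map_add, map_smul, LinearMap.add_apply, LinearMap.smul_apply, smul_eq_mul,
    hω.alt p, hω.alt q, hω.swap q p]
  ring

lemma area_orbitMap_eq_zero_iff {p q : V} (hpq : orbitForm ω A p q ≠ 0) (v w : V) :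
    ω (orbitMap ω A p q v) (orbitMap ω A p q w) = 0 ↔ ∃ g, ω (A g v) w = 0 := by
  obtain ⟨c, hc, hF⟩ := exists_area_orbitMap hA hω hpq
  rw [hF, mul_eq_zero, or_iff_right hc, orbitForm_eq_zero_iff]

lemma orbitMap_ne_zero {p q : V} (hpq : orbitForm ω A p q ≠ 0) {v : V} (hv : v ≠ 0) :
    orbitMap ω A p q v ≠ 0 := by
  intro hFv
  obtain ⟨c, hc, hF⟩ := exists_area_orbitMap hA hω hpq
  obtain ⟨w, hw⟩ := exists_orbitForm_ne_zero hA hω hv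
  exact mul_ne_zero hc hw (by rw [← hF, hFv, map_zero, LinearMap.zero_apply])

end OrbitForm

section Spinors

open Complex RealInnerProductSpace

/-- The complex plane on which rotations of space act projectively. -/
abbrev Spinor := EuclideanSpace ℂ (Fin 2)

/-- Euclidean three-space. -/
abbrev Space := EuclideanSpace ℝ (Fin 3)

/-- The determinant of two spinors. -/
noncomputable def spinorForm : LinearMap.BilinForm ℂ Spinor :=
  LinearMap.mk₂ ℂ (fun v w => v 0 * w 1 - v 1 * w 0)
    (fun _ _ _ => by simp only [PiLp.add_apply]; ring)
    (fun _ _ _ => by simp only [PiLp.smul_apply, smul_eq_mul]; ring)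
    (fun _ _ _ => by simp only [PiLp.add_apply]; ring)
    (fun _ _ _ => by simp only [PiLp.smul_apply, smul_eq_mul]; ring)

/-- The Hopf map `ℂ² → ℝ³`, extended to the whole plane as a real quadratic map: its coordinates
are the expectations of the three Pauli matrices. -/
noncomputable def hopf (v : Spinor) : Space :=
  !₂[2 * ((v 0).re * (v 1).re + (v 0).im * (v 1).im),
    2 * ((v 0).re * (v 1).im - (v 0).im * (v 1).re), normSq (v 0) - normSq (v 1)]

/-- The combination of the Pauli matrices with coefficients `x`, acting on spinors. -/
noncomputable def pauli (x : Space) : Spinor →ₗ[ℂ] Spinor :=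
  toLpLin 2 2 !![(x 2 : ℂ), x 0 - x 1 * I; x 0 + x 1 * I, -x 2]

/-- An area-preserving linear map of spinors that covers `T` under the Hopf map. -/
structure IsSpinLift (U : Spinor →ₗ[ℂ] Spinor) (T : Space → Space) : Prop where
  area : ∀ v w, spinorForm (U v) (U w) = spinorForm v w
  hopf : ∀ v, hopf (U v) = T (hopf v)

lemma spinorForm_apply (v w : Spinor) : spinorForm v w = v 0 * w 1 - v 1 * w 0 := rfl

lemma isAreaForm_spinorForm : IsAreaForm spinorForm where
  alt v := by rw [spinorForm_apply]; ring
  exists_ne_zero v hv := by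
    by_contra! h
    refine hv (PiLp.ext (Fin.forall_fin_two.2 ⟨?_, ?_⟩))
    · simpa [spinorForm_apply] using h !₂[0, 1]
    · simpa [spinorForm_apply] using h !₂[1, 0]
  plane u v w := by
    refine PiLp.ext (Fin.forall_fin_two.2 ⟨?_, ?_⟩) <;>
      simp only [spinorForm_apply, PiLp.add_apply, PiLp.smul_apply, PiLp.zero_apply,
        smul_eq_mul] <;> ring

lemma norm_sq_spinor (v : Spinor) : ‖v‖ ^ 2 = normSq (v 0) + normSq (v 1) := by
  rw [EuclideanSpace.norm_sq_eq, Fin.sum_univ_two, Complex.sq_norm, Complex.sq_norm]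

lemma continuous_hopf : Continuous hopf := by
  unfold hopf
  fun_prop

lemma norm_hopf_sub_sq (v w : Spinor) :
    ‖hopf v - hopf w‖ ^ 2 = (‖v‖ ^ 2 - ‖w‖ ^ 2) ^ 2 + 4 * ‖spinorForm v w‖ ^ 2 := by
  rw [EuclideanSpace.real_norm_sq_eq, Fin.sum_univ_three, norm_sq_spinor, norm_sq_spinor,
    Complex.sq_norm, spinorForm_apply]
  simp only [hopf, normSq_apply, PiLp.sub_apply, sub_re, sub_im, mul_re, mul_im,
    cons_val_zero, cons_val_one, cons_val]
  ring

lemma hopf_zero : hopf 0 = 0 := by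
  ext i
  fin_cases i <;> simp [hopf]

lemma norm_hopf (v : Spinor) : ‖hopf v‖ = ‖v‖ ^ 2 := by
  have h := norm_hopf_sub_sq v 0
  rw [hopf_zero, map_zero, norm_zero, norm_zero] at h
  exact (sq_eq_sq₀ (norm_nonneg _) (sq_nonneg _)).1 (by simpa using h)

lemma hopf_eq_hopf_iff {v w : Spinor} :
    hopf v = hopf w ↔ ‖v‖ = ‖w‖ ∧ spinorForm v w = 0 := by
  rw [← sub_eq_zero, ← norm_eq_zero, ← sq_eq_zero_iff, norm_hopf_sub_sq,
    add_eq_zero_iff_of_nonneg (sq_nonneg _) (by positivity), sq_eq_zero_iff, sub_eq_zero,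
    sq_eq_sq₀ (norm_nonneg v) (norm_nonneg w)]
  simp

lemma hopf_smul (c : ℂ) (v : Spinor) : hopf (c • v) = ‖c‖ ^ 2 • hopf v := by
  rw [Complex.sq_norm, normSq_apply]
  ext i
  fin_cases i <;> simp [hopf, normSq_apply] <;> ring

lemma pauli_apply_zero (x : Space) (v : Spinor) :
    pauli x v 0 = x 2 * v 0 + (x 0 - x 1 * I) * v 1 := by
  simp [pauli, toLpLin_apply, vecHead, vecTail]

lemma pauli_apply_one (x : Space) (v : Spinor) :
    pauli x v 1 = (x 0 + x 1 * I) * v 0 - x 2 * v 1 := by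
  simp [pauli, toLpLin_apply, vecHead, vecTail, sub_eq_add_neg]

lemma spinorForm_pauli (x : Space) (v w : Spinor) :
    spinorForm (pauli x v) (pauli x w) = -(‖x‖ : ℂ) ^ 2 * spinorForm v w := by
  rw [← ofReal_pow, EuclideanSpace.real_norm_sq_eq, Fin.sum_univ_three]
  simp only [spinorForm_apply, pauli_apply_zero, pauli_apply_one]
  push_cast
  linear_combination (x 1 : ℂ) ^ 2 * (v 0 * w 1 - v 1 * w 0) * I_sq

lemma hopf_pauli (x : Space) (v : Spinor) :
    hopf (pauli x v) = (2 * ⟪x, hopf v⟫) • x - ‖x‖ ^ 2 • hopf v := by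
  rw [EuclideanSpace.real_norm_sq_eq, Fin.sum_univ_three, PiLp.inner_apply, Fin.sum_univ_three]
  ext i
  fin_cases i <;> simp [hopf, pauli_apply_zero, pauli_apply_one, normSq_apply] <;> ring

section Lifts

variable {U U' : Spinor →ₗ[ℂ] Spinor} {T T' : Space → Space}

lemma IsSpinLift.id : IsSpinLift .id id := ⟨fun _ _ => rfl, fun _ => rfl⟩

lemma IsSpinLift.comp (h : IsSpinLift U T) (h' : IsSpinLift U' T') :
    IsSpinLift (U ∘ₗ U') (T ∘ T') where
  area v w := by rw [U.comp_apply, U.comp_apply, h.area, h'.area]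
  hopf v := by rw [U.comp_apply, h.hopf, h'.hopf, Function.comp_apply]

lemma IsSpinLift.norm_apply {T : Space ≃ₗᵢ[ℝ] Space} (h : IsSpinLift U T) (v : Spinor) :
    ‖U v‖ = ‖v‖ := by
  rw [← sq_eq_sq₀ (norm_nonneg _) (norm_nonneg _), ← norm_hopf, ← norm_hopf, h.hopf, T.norm_map]

lemma isSpinLift_reflection_span_singleton {x : Space} (hx : x ≠ 0) :
    IsSpinLift ((I / ‖x‖ : ℂ) • pauli x) (ℝ ∙ x).reflection where
  area v w := by
    have hx' : (‖x‖ : ℂ) ≠ 0 := ofReal_ne_zero.2 (norm_ne_zero_iff.2 hx)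
    simp only [LinearMap.smul_apply, map_smul, spinorForm_pauli, smul_eq_mul]
    field_simp
    rw [I_sq, neg_one_mul, neg_neg]
  hopf v := by
    have hx' : ‖x‖ ≠ 0 := norm_ne_zero_iff.2 hx
    rw [LinearMap.smul_apply, hopf_smul, hopf_pauli, Submodule.reflection_singleton_apply,
      norm_div, norm_I, norm_real, norm_norm]
    simp only [smul_sub, smul_smul, two_smul, ← add_smul, RCLike.ofReal_real_eq_id, id_eq]
    rw [one_div, inv_pow, inv_mul_cancel₀ (pow_ne_zero 2 hx'), one_smul]
    congr 2
    ring

/-- The rotation among `T` and `-T`. -/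
noncomputable def orient (T : Space ≃ₗᵢ[ℝ] Space) (y : Space) : Space :=
  LinearMap.det (T.toLinearEquiv : Space →ₗ[ℝ] Space) • T y

lemma orient_mul (S T : Space ≃ₗᵢ[ℝ] Space) : orient (S * T) = orient S ∘ orient T := by
  ext1 y
  have hdet : LinearMap.det ((S * T).toLinearEquiv : Space →ₗ[ℝ] Space) =
      LinearMap.det (S.toLinearEquiv : Space →ₗ[ℝ] Space) *
        LinearMap.det (T.toLinearEquiv : Space →ₗ[ℝ] Space) := LinearMap.det_comp _ _
  rw [orient, hdet, Function.comp_apply, orient, orient, map_smul, mul_smul]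
  rfl

lemma orient_one : orient 1 = id := by
  ext1 y
  have hdet : LinearMap.det ((1 : Space ≃ₗᵢ[ℝ] Space).toLinearEquiv : Space →ₗ[ℝ] Space) = 1 :=
    LinearMap.det_id
  rw [orient, hdet, one_smul, LinearIsometryEquiv.coe_one]

lemma orient_reflection_orthogonal_span_singleton {x : Space} (hx : x ≠ 0) :
    orient (ℝ ∙ x)ᗮ.reflection = (ℝ ∙ x).reflection := by
  ext1 y
  rw [orient, Submodule.det_reflection, Submodule.orthogonal_orthogonal, finrank_span_singleton hx,
    pow_one, neg_one_smul, Submodule.reflection_orthogonal_apply, neg_neg]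

lemma exists_isSpinLift_orient (T : Space ≃ₗᵢ[ℝ] Space) : ∃ U, IsSpinLift U (orient T) := by
  obtain ⟨l, -, rfl⟩ := T.reflections_generate_dim
  induction l with
  | nil => exact ⟨.id, by simpa only [List.map_nil, List.prod_nil, orient_one] using .id⟩
  | cons x l ih =>
    obtain ⟨U, hU⟩ := ih
    rw [List.map_cons, List.prod_cons, orient_mul]
    rcases eq_or_ne x 0 with rfl | hx
    · have hrefl : (ℝ ∙ (0 : Space))ᗮ.reflection = 1 := by
        ext1 y
        rw [Submodule.reflection_orthogonal_apply, Submodule.reflection_singleton_apply]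
        simp
      rw [hrefl, orient_one]
      exact ⟨U, hU⟩
    · rw [orient_reflection_orthogonal_span_singleton hx]
      exact ⟨_, (isSpinLift_reflection_span_singleton hx).comp hU⟩

lemma hopf_surjective : Function.Surjective hopf := by
  intro x
  set e : Space := !₂[0, 0, ‖x‖] with he
  have hup : hopf !₂[(√‖x‖ : ℂ), 0] = e := by simp [hopf, he]
  have hdown : hopf !₂[0, (√‖x‖ : ℂ)] = -e := by
    ext i
    fin_cases i <;> simp [hopf, he]
  have hnorm : ‖e‖ = ‖-x‖ := by
    rw [norm_neg, ← hup, norm_hopf, norm_sq_spinor]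
    simp
  rcases eq_or_ne (e - -x) 0 with hex | hex
  · exact ⟨_, hdown.trans (by rw [sub_eq_zero.1 hex, neg_neg])⟩
  · have hlift := (isSpinLift_reflection_span_singleton hex).hopf !₂[(√‖x‖ : ℂ), 0]
    refine ⟨_, hlift.trans ?_⟩
    rw [hup, ← neg_neg (Submodule.reflection _ e), ← Submodule.reflection_orthogonal_apply,
      Submodule.reflection_sub hnorm, neg_neg]

lemma IsSpinLift.exists_eq_smul (h : IsSpinLift U T) (h' : IsSpinLift U' T) :
    ∃ c : ℂ, ∀ v, U v = c • U' v := by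
  let e := LinearEquiv.ofInjectiveEndo U' (isAreaForm_spinorForm.injective h'.area)
  have he (v : Spinor) : U' (e.symm v) = v := e.apply_symm_apply v
  obtain ⟨c, hc⟩ := isAreaForm_spinorForm.exists_forall_eq_smul (f := e.symm ∘ₗ U) fun v => by
    rw [← h'.area, LinearMap.comp_apply, LinearEquiv.coe_coe, he]
    exact (hopf_eq_hopf_iff.1 ((h'.hopf v).trans (h.hopf v).symm)).2
  exact ⟨c, fun v => by rw [← he (U v), ← map_smul, ← hc]; rfl⟩

end Lifts

section Group

variable {G : Type*} [Group G] {ρ : G →* Space ≃ₗᵢ[ℝ] Space} {A : G → Spinor →ₗ[ℂ] Spinor}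

lemma isProjectiveRep_of_isSpinLift (hρ : Function.Injective ρ)
    (hA : ∀ g, IsSpinLift (A g) (ρ g)) : IsProjectiveRep spinorForm A where
  area g := (hA g).area
  mul g h := by
    have hgh := (hA g).comp (hA h)
    rw [← LinearIsometryEquiv.coe_mul, ← map_mul] at hgh
    exact (hA (g * h)).exists_eq_smul hgh
  faithful g h hgh := by
    by_contra! hzero
    refine hgh (hρ (LinearIsometryEquiv.ext fun x => ?_))
    obtain ⟨v, rfl⟩ := hopf_surjective x
    rw [← (hA g).hopf, ← (hA h).hopf, hopf_eq_hopf_iff, (hA g).norm_apply, (hA h).norm_apply]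
    exact ⟨rfl, hzero v⟩

end Group

end Spinors

section Topology

lemma isClosedMap_of_tendsto_norm {E F : Type*} [NormedAddCommGroup E] [ProperSpace E]
    [NormedAddCommGroup F] [ProperSpace F] {f : E → F} (hf : Continuous f)
    (hf_norm : Filter.Tendsto (fun v => ‖f v‖) (Bornology.cobounded E) Filter.atTop) :
    IsClosedMap f := by
  refine (isProperMap_iff_tendsto_cocompact.2 ⟨hf, ?_⟩).isClosedMap
  rwa [← Metric.cobounded_eq_cocompact, ← Metric.cobounded_eq_cocompact,
    ← tendsto_norm_atTop_iff_cobounded]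

section Rescale

variable {𝕜 E F : Type*} [RCLike 𝕜] [NormedAddCommGroup E] [NormedAddCommGroup F]
  [NormedSpace 𝕜 F] {f : E → F}

variable (𝕜) in
/-- The norm-preserving map with the same directions as `f`. -/
noncomputable def rescale (f : E → F) (v : E) : F := ((‖v‖ / ‖f v‖ : ℝ) : 𝕜) • f v

lemma norm_rescale (hf : ∀ v ≠ 0, f v ≠ 0) (v : E) : ‖rescale 𝕜 f v‖ = ‖v‖ := by
  rcases eq_or_ne v 0 with rfl | hv
  · simp [rescale]
  · rw [rescale, norm_smul, RCLike.norm_ofReal, abs_of_nonneg (by positivity),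
      div_mul_cancel₀ _ (norm_ne_zero_iff.2 (hf v hv))]

lemma continuous_rescale (hf : ∀ v ≠ 0, f v ≠ 0) (hcont : Continuous f) :
    Continuous (rescale 𝕜 f) := by
  refine continuous_iff_continuousAt.2 fun v => ?_
  rcases eq_or_ne v 0 with rfl | hv
  · have hzero : rescale 𝕜 f 0 = 0 := by simp [rescale]
    rw [ContinuousAt, hzero, tendsto_zero_iff_norm_tendsto_zero]
    simpa only [norm_rescale hf] using tendsto_norm_zero
  · have hfv : ‖f v‖ ≠ 0 := norm_ne_zero_iff.2 (hf v hv)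
    exact (RCLike.continuous_ofReal.continuousAt.comp
      (continuousAt_id.norm.div hcont.continuousAt.norm hfv)).smul hcont.continuousAt

lemma bilinForm_rescale_eq_zero_iff (B : LinearMap.BilinForm 𝕜 F) (hf : ∀ v ≠ 0, f v ≠ 0)
    {v w : E} (hv : v ≠ 0) (hw : w ≠ 0) :
    B (rescale 𝕜 f v) (rescale 𝕜 f w) = 0 ↔ B (f v) (f w) = 0 := by
  have hscale {u : E} (hu : u ≠ 0) : ((‖u‖ / ‖f u‖ : ℝ) : 𝕜) ≠ 0 :=
    RCLike.ofReal_ne_zero.2 (div_ne_zero (norm_ne_zero_iff.2 hu) (norm_ne_zero_iff.2 (hf u hu)))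
  simp only [rescale, map_smul, LinearMap.smul_apply, smul_eq_mul, mul_eq_zero, hscale hv,
    hscale hw, false_or]

end Rescale

lemma isQuotientMap_hopf : Topology.IsQuotientMap hopf := by
  refine IsClosedMap.isQuotientMap (isClosedMap_of_tendsto_norm continuous_hopf ?_)
    continuous_hopf hopf_surjective
  simpa only [norm_hopf, Function.comp_def] using
    (Filter.tendsto_pow_atTop two_ne_zero).comp tendsto_norm_cobounded_atTop

lemma continuous_orbitMap_spinorForm {G : Type*} [Fintype G] (A : G → Spinor →ₗ[ℂ] Spinor)
    (p q : Spinor) : Continuous (orbitMap spinorForm A p q) := by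
  unfold orbitMap orbitForm
  simp only [spinorForm_apply]
  fun_prop

variable {G : Type*} [Group G] [Finite G]

lemma exists_spinor_orbitMap {A : G → Spinor →ₗ[ℂ] Spinor}
    (hA : IsProjectiveRep spinorForm A) :
    ∃ F : Spinor → Spinor, Continuous F ∧ (∀ v, ‖F v‖ = ‖v‖) ∧
      (∀ v w, spinorForm (F v) (F w) = 0 ↔ ∃ g, spinorForm (A g v) w = 0) ∧
      ∀ u, ∃ v, ‖v‖ = ‖u‖ ∧ spinorForm (F v) u = 0 := by
  have := Fintype.ofFinite G
  have hω := isAreaForm_spinorForm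
  obtain ⟨p, hp⟩ := exists_ne (0 : Spinor)
  obtain ⟨q, hpq⟩ := exists_orbitForm_ne_zero hA hω hp
  have hne : ∀ v ≠ 0, orbitMap spinorForm A p q v ≠ 0 := fun _ => orbitMap_ne_zero hA hω hpq
  have hF_norm := norm_rescale (𝕜 := ℂ) hne
  refine ⟨rescale ℂ (orbitMap spinorForm A p q),
    continuous_rescale hne (continuous_orbitMap_spinorForm A p q), hF_norm, fun v w => ?_,
    fun u => ?_⟩
  · rcases eq_or_ne v 0 with rfl | hv
    · simp [rescale]
    rcases eq_or_ne w 0 with rfl | hw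
    · simp [rescale]
    rw [bilinForm_rescale_eq_zero_iff _ hne hv hw, area_orbitMap_eq_zero_iff hA hω hpq]
  · obtain ⟨v, hv, hvu⟩ := exists_area_orbitMap_left_eq_zero (A := A) hω p q u
    refine ⟨((‖u‖ / ‖v‖ : ℝ) : ℂ) • v, ?_, ?_⟩
    · rw [norm_smul, Complex.norm_real, Real.norm_of_nonneg (by positivity),
        div_mul_cancel₀ _ (norm_ne_zero_iff.2 hv)]
    · simp only [rescale, orbitMap_smul, map_smul, LinearMap.smul_apply, hvu, smul_zero]

theorem exists_normPreserving_orbit_map {ρ : G →* Space ≃ₗᵢ[ℝ] Space}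
    (hρ : Function.Injective ρ)
    (hdet : ∀ g, LinearMap.det ((ρ g).toLinearEquiv : Space →ₗ[ℝ] Space) = 1) :
    ∃ Φ : Space → Space, Continuous Φ ∧ Function.Surjective Φ ∧ (∀ x, ‖Φ x‖ = ‖x‖) ∧
      ∀ x y, Φ x = Φ y ↔ ∃ g, ρ g x = y := by
  have hlift (g : G) : ∃ U, IsSpinLift U (ρ g) := by
    obtain ⟨U, hU⟩ := exists_isSpinLift_orient (ρ g)
    exact ⟨U, hU.area, fun v => by rw [hU.hopf, orient, hdet, one_smul]⟩
  choose A hA using hlift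
  obtain ⟨F, hF_cont, hF_norm, hF_eq, hF_surj⟩ :=
    exists_spinor_orbitMap (isProjectiveRep_of_isSpinLift hρ hA)
  have hfibre (v w : Spinor) : hopf (F v) = hopf (F w) ↔ ∃ g, ρ g (hopf v) = hopf w := by
    simp only [hopf_eq_hopf_iff, hF_norm, hF_eq, ← (hA _).hopf, (hA _).norm_apply,
      exists_and_left]
  obtain ⟨Φ, hΦ⟩ : ∃ Φ : C(Space, Space), ∀ v, Φ (hopf v) = hopf (F v) := by
    have hquot : Topology.IsQuotientMap (⟨hopf, continuous_hopf⟩ : C(Spinor, Space)) :=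
      isQuotientMap_hopf
    let Ψ : C(Spinor, Space) := ⟨hopf ∘ F, continuous_hopf.comp hF_cont⟩
    have hΨ (v w : Spinor) (hvw : hopf v = hopf w) : Ψ v = Ψ w :=
      (hfibre v w).2 ⟨1, by rwa [map_one, LinearIsometryEquiv.coe_one]⟩
    exact ⟨hquot.lift Ψ hΨ, fun v => DFunLike.congr_fun (hquot.lift_comp Ψ hΨ) v⟩
  refine ⟨Φ, Φ.continuous, ?_, ?_, ?_⟩
  · rw [Function.Surjective, hopf_surjective.forall]
    intro u
    obtain ⟨v, hv, hvu⟩ := hF_surj u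
    exact ⟨hopf v, (hΦ v).trans (hopf_eq_hopf_iff.2 ⟨(hF_norm v).trans hv, hvu⟩)⟩
  · rw [hopf_surjective.forall]
    intro v
    rw [hΦ, norm_hopf, hF_norm, norm_hopf]
  · rw [hopf_surjective.forall₂]
    intro v w
    rw [hΦ, hΦ, hfibre]

end Topology

section Matrices

/-- The standard action of orthogonal matrices on Euclidean space, by linear isometries. -/
noncomputable def orthogonalIsometry (n : Type*) [Fintype n] [DecidableEq n] :
    orthogonalGroup n ℝ →* (EuclideanSpace ℝ n ≃ₗᵢ[ℝ] EuclideanSpace ℝ n) where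
  toFun g := Unitary.linearIsometryEquiv
    ⟨toEuclideanCLM (𝕜 := ℝ) (g : Matrix n n ℝ), Unitary.map_mem _ g.2⟩
  map_one' := (congrArg _ (Subtype.ext (map_one _))).trans (map_one _)
  map_mul' _ _ := (congrArg _ (Subtype.ext (map_mul _ _ _))).trans (map_mul _ _ _)

variable {n : Type*} [Fintype n] [DecidableEq n]

lemma ofLp_orthogonalIsometry (g : orthogonalGroup n ℝ) (x : EuclideanSpace ℝ n) :
    (orthogonalIsometry n g x).ofLp = (g : Matrix n n ℝ).mulVec x := rfl

lemma det_orthogonalIsometry (g : orthogonalGroup n ℝ) :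
    LinearMap.det ((orthogonalIsometry n g).toLinearEquiv :
      EuclideanSpace ℝ n →ₗ[ℝ] EuclideanSpace ℝ n) = (g : Matrix n n ℝ).det :=
  LinearMap.det_toLpLin 2 (g : Matrix n n ℝ)

lemma orthogonalIsometry_injective : Function.Injective (orthogonalIsometry n) := by
  intro g h hgh
  refine Subtype.ext (Matrix.mulVec_injective (funext fun x => ?_))
  simpa only [ofLp_orthogonalIsometry] using
    congrArg WithLp.ofLp (DFunLike.congr_fun hgh (WithLp.toLp 2 x))

end Matrices

section Quotient

lemma nonempty_quot_homeomorph {X Y : Type*} [TopologicalSpace X] [TopologicalSpace Y]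
    {r : X → X → Prop} {f : X → Y} (hf : Topology.IsQuotientMap f)
    (hr : ∀ x y, r x y ↔ f x = f y) : Nonempty (Quot r ≃ₜ Y) := by
  obtain rfl : r = Setoid.ker f := by
    ext x y
    exact hr x y
  exact ⟨Topology.IsQuotientMap.homeomorph (f := ⟨f, hf.continuous⟩) hf⟩

theorem nonempty_quot_soRel_homeomorph {Γ : Subgroup (orthogonalGroup (Fin 3) ℝ)}
    {Φ : Space → Space} (hcont : Continuous Φ) (hclosed : IsClosedMap Φ)
    (hsurj : Function.Surjective Φ)
    (hΦ : ∀ x y, Φ x = Φ y ↔ ∃ g : Γ, orthogonalIsometry (Fin 3) g x = y)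
    {S T : Set Space} (hST : Φ ⁻¹' T = S) : Nonempty (Quot (soRel Γ S) ≃ₜ T) := by
  subst hST
  refine nonempty_quot_homeomorph (f := T.restrictPreimage Φ)
    ((hclosed.restrictPreimage T).isQuotientMap hcont.restrictPreimage
      (Set.restrictPreimage_surjective T hsurj)) fun x y => ?_
  rw [Subtype.ext_iff, Set.restrictPreimage_coe, Set.restrictPreimage_coe, hΦ]
  exact ⟨fun ⟨g, hg, hgxy⟩ => ⟨⟨g, hg⟩, WithLp.ofLp_injective 2 hgxy⟩,
    fun ⟨g, hgxy⟩ => ⟨g, g.2, congrArg WithLp.ofLp hgxy⟩⟩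

end Quotient

end SphereQuotient

/-- Every finite subgroup Γ of SO(3) (orthogonal matrices of determinant 1) acting
standardly on S² has quotient S²/Γ homeomorphic to S²; consequently the quotient
ℝ³/Γ is homeomorphic to ℝ³.  (Quotients carry the quotient topology.) -/
theorem stmt_3 (Γ : Subgroup (Matrix.orthogonalGroup (Fin 3) ℝ)) (hΓfin : Finite Γ)
    (hdet : ∀ g ∈ Γ, (g : Matrix (Fin 3) (Fin 3) ℝ).det = 1) :
    Nonempty (Quot (soRel Γ (Metric.sphere (0 : EuclideanSpace ℝ (Fin 3)) 1)) ≃ₜ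
        Metric.sphere (0 : EuclideanSpace ℝ (Fin 3)) 1) ∧
    Nonempty (Quot (soRel Γ (Set.univ : Set (EuclideanSpace ℝ (Fin 3)))) ≃ₜ
        EuclideanSpace ℝ (Fin 3)) := by
  obtain ⟨Φ, hcont, hsurj, hnorm, hfibre⟩ :=
    SphereQuotient.exists_normPreserving_orbit_map
      (ρ := (SphereQuotient.orthogonalIsometry (Fin 3)).comp Γ.subtype)
      (SphereQuotient.orthogonalIsometry_injective.comp Γ.subtype_injective)
      fun g => (SphereQuotient.det_orthogonalIsometry (g : orthogonalGroup (Fin 3) ℝ)).trans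
        (hdet g g.2)
  have hclosed : IsClosedMap Φ := SphereQuotient.isClosedMap_of_tendsto_norm hcont <| by
    simpa only [hnorm] using tendsto_norm_cobounded_atTop
  have hquot {S T : Set (EuclideanSpace ℝ (Fin 3))} (hST : Φ ⁻¹' T = S) :
      Nonempty (Quot (soRel Γ S) ≃ₜ T) :=
    SphereQuotient.nonempty_quot_soRel_homeomorph hcont hclosed hsurj hfibre hST
  constructor
  · refine hquot ?_
    ext x
    simp only [Set.mem_preimage, mem_sphere_zero_iff_norm, hnorm]
  · exact (hquot Set.preimage_univ).map fun e => e.trans (Homeomorph.Set.univ _)
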